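/- Let 0 < a < b and I = [a,b]. Suppose v is a nonnegative measurable function on (0,∞)∖I with ∫_{(0,∞)∖I} v(t)|σ(t)| dt < ∞ and (2/π)∫_{(0,∞)∖I} t·v(t)·σ(t) dt = α with α < 0. Then for every ω ∈ (a,b): ℋ_I(σv)(ω) ≥ (1/π)∫₀^a v(t)·σ(t)·2t/(t²−ω²) dt ≥ |α|/ω². -/

import Mathlib

open MeasureTheory Set
open scoped ENNReal

/-- The function `σ` on `(0,∞) ∖ [a,b]`:
`σ(t) = -1/√((b²-t²)(a²-t²))` for `0 < t < a`, and
`σ(t) = 1/√((t²-b²)(t²-a²))` for `t > b`. -/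
noncomputable def sigmaOut (a b t : ℝ) : ℝ :=
  if t < a then -(1 / Real.sqrt ((b ^ 2 - t ^ 2) * (a ^ 2 - t ^ 2)))
  else 1 / Real.sqrt ((t ^ 2 - b ^ 2) * (t ^ 2 - a ^ 2))

/-- `σ ≤ 0` to the left of `a`. -/
theorem sigmaOut_nonpos {a b t : ℝ} (ht : t < a) : sigmaOut a b t ≤ 0 := by
  rw [sigmaOut, if_pos ht, neg_nonpos]
  positivity

/-- `0 ≤ σ` from `a` onwards. -/
theorem sigmaOut_nonneg {a b t : ℝ} (ht : a ≤ t) : 0 ≤ sigmaOut a b t := by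
  rw [sigmaOut, if_neg ht.not_gt]
  positivity

/-- The complement of `[a,b]` in the half-line splits into its two components. -/
theorem Ioi_diff_Icc_eq_union {a b : ℝ} (ha : 0 < a) (hab : a < b) :
    Ioi (0 : ℝ) \ Icc a b = Ioo 0 a ∪ Ioi b := by
  ext t
  simp only [mem_sdiff, mem_Ioi, mem_Icc, mem_union, mem_Ioo, not_and_or, not_le]
  constructor
  · rintro ⟨h0, h | h⟩
    exacts [Or.inl ⟨h0, h⟩, Or.inr h]
  · rintro (⟨h0, h⟩ | h)
    exacts [⟨h0, Or.inl h⟩, ⟨by linarith, Or.inr h⟩]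

/-- If `v ≥ 0` on `(0,∞)∖I`, `∫_{(0,∞)∖I} v|σ| < ∞` and
`(2/π)∫_{(0,∞)∖I} t v(t) σ(t) dt = α < 0`, then for every `ω ∈ (a,b)`:
`ℋ_I(σv)(ω) ≥ (1/π)∫₀^a v(t) σ(t) 2t/(t²-ω²) dt ≥ |α|/ω²`. -/
theorem HI_sigma_v_lower_bound (a b α : ℝ) (ha : 0 < a) (hab : a < b) (v : ℝ → ℝ)
    (hm : Measurable v)
    (hnn : ∀ t ∈ Set.Ioi 0 \ Set.Icc a b, 0 ≤ v t)
    (hint : IntegrableOn (fun t => v t * |sigmaOut a b t|) (Set.Ioi 0 \ Set.Icc a b))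
    (hα : (2 / Real.pi) * (∫ t in Set.Ioi 0 \ Set.Icc a b, t * v t * sigmaOut a b t) = α)
    (hα0 : α < 0) :
    ∀ ω ∈ Set.Ioo a b,
      (1 / Real.pi) * (∫ t in Set.Ioo 0 a,
          v t * sigmaOut a b t * (2 * t / (t ^ 2 - ω ^ 2)))
        ≤ (1 / Real.pi) * (∫ t in Set.Ioi 0 \ Set.Icc a b,
            v t * sigmaOut a b t * (2 * t / (t ^ 2 - ω ^ 2))) ∧
      |α| / ω ^ 2 ≤ (1 / Real.pi) * (∫ t in Set.Ioo 0 a,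
          v t * sigmaOut a b t * (2 * t / (t ^ 2 - ω ^ 2))) := by
  intro ω hω
  obtain ⟨haω, hωb⟩ := hω
  have hω0 : 0 < ω := ha.trans haω
  have hint_ne : (∫ t in Ioi 0 \ Icc a b, t * v t * sigmaOut a b t) ≠ 0 := by
    intro h
    rw [h, mul_zero] at hα
    exact hα0.ne hα.symm
  have hmom : IntegrableOn (fun t => t * v t * sigmaOut a b t) (Ioi 0 \ Icc a b) := by
    by_contra h
    exact hint_ne (integral_undef h)
  have hS := Ioi_diff_Icc_eq_union ha hab
  rw [hS] at hnn hα hmom ⊢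
  have hleft : ∀ t ∈ Ioo 0 a, t * v t * sigmaOut a b t ≤ 0 := fun t ht =>
    mul_nonpos_of_nonneg_of_nonpos (mul_nonneg ht.1.le (hnn t (Or.inl ht)))
      (sigmaOut_nonpos ht.2)
  have hright : ∀ t ∈ Ioi b, 0 ≤ t * v t * sigmaOut a b t := fun t (ht : b < t) =>
    mul_nonneg (mul_nonneg (by linarith) (hnn t (Or.inr ht))) (sigmaOut_nonneg (by linarith))
  have hkernel : (fun t => v t * sigmaOut a b t * (2 * t / (t ^ 2 - ω ^ 2))) =
      fun t => t * v t * sigmaOut a b t * (2 / (t ^ 2 - ω ^ 2)) := by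
    funext t
    ring
  rw [hkernel]
  have hmeas : MeasurableSet (Ioo 0 a ∪ Ioi b) := measurableSet_Ioo.union measurableSet_Ioi
  have hδ : 0 < min (ω ^ 2 - a ^ 2) (b ^ 2 - ω ^ 2) :=
    lt_min (by nlinarith) (by nlinarith)
  have hkint : IntegrableOn (fun t => t * v t * sigmaOut a b t * (2 / (t ^ 2 - ω ^ 2)))
      (Ioo 0 a ∪ Ioi b) := by
    refine Integrable.mul_bdd (c := 2 / min (ω ^ 2 - a ^ 2) (b ^ 2 - ω ^ 2)) hmom
      (by fun_prop : Measurable fun t : ℝ => 2 / (t ^ 2 - ω ^ 2)).aestronglyMeasurable ?_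
    refine (ae_restrict_iff' hmeas).2 (ae_of_all _ fun t ht => ?_)
    rw [Real.norm_eq_abs, abs_div, abs_two]
    gcongr
    rcases ht with ht | ht
    · refine (min_le_left _ _).trans (le_trans ?_ (neg_le_abs _))
      nlinarith [ht.1, ht.2]
    · refine (min_le_right _ _).trans (le_trans ?_ (le_abs_self _))
      nlinarith [mem_Ioi.1 ht]
  constructor
  · refine mul_le_mul_of_nonneg_left (setIntegral_mono_set hkint ?_ ?_) (by positivity)
    · refine (ae_restrict_iff' hmeas).2 (ae_of_all _ fun t ht => ?_)
      rcases ht with ht | ht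
      · refine mul_nonneg_of_nonpos_of_nonpos (hleft t ht)
          (div_nonpos_of_nonneg_of_nonpos zero_le_two ?_)
        nlinarith [ht.1, ht.2]
      · refine mul_nonneg (hright t ht) (div_nonneg zero_le_two ?_)
        nlinarith [mem_Ioi.1 ht]
    · exact subset_union_left.eventuallyLE
  · have hmomL := hmom.mono_set (subset_union_left (s := Ioo 0 a) (t := Ioi b))
    have hmomR := hmom.mono_set (subset_union_right (s := Ioo 0 a) (t := Ioi b))
    have hdisj : Disjoint (Ioo 0 a) (Ioi b) :=
      disjoint_left.2 fun t ht ht' => by linarith [ht.2, mem_Ioi.1 ht']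
    rw [setIntegral_union hdisj measurableSet_Ioi hmomL hmomR] at hα
    have hR := setIntegral_nonneg (μ := volume) measurableSet_Ioi hright
    have hL : (∫ t in Ioo 0 a, t * v t * sigmaOut a b t * (-2 / ω ^ 2)) ≤
        ∫ t in Ioo 0 a, t * v t * sigmaOut a b t * (2 / (t ^ 2 - ω ^ 2)) := by
      refine setIntegral_mono_on (hmomL.mul_const _) (hkint.mono_set subset_union_left)
        measurableSet_Ioo fun t ht => mul_le_mul_of_nonpos_left ?_ (hleft t ht)
      have hpos : 0 < ω ^ 2 - t ^ 2 := by nlinarith [ht.1, ht.2]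
      rw [← neg_sub (ω ^ 2), div_neg, neg_div, neg_le_neg_iff]
      gcongr
      nlinarith [ht.1]
    rw [integral_mul_const] at hL
    refine le_trans ?_ (mul_le_mul_of_nonneg_left hL (by positivity))
    have hc : 0 ≤ 2 / Real.pi / ω ^ 2 := by positivity
    rw [abs_of_neg hα0, ← hα]
    have := mul_nonneg hc hR
    linear_combination this
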